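/- Fix k ≠ l. There exist finitely many finite compositions Ξ_1, …, Ξ_r of Demazure operators taken from {D_k, D_l} and polynomials c_1, …, c_r ∈ ℂ[α_k, α_l] ⊆ A such that c_1·Ξ_1(Δ_{k,l}) + ⋯ + c_r·Ξ_r(Δ_{k,l}) = 1. -/

import Mathlib

open scoped TensorProduct

noncomputable section

abbrev Vd (d : ℕ) := Fin d → ℂ
abbrev Ad (d : ℕ) := MvPolynomial (Fin d) ℂ

/-- Action of `g ∈ GL(V)` on polynomials: substitute `X j ↦ (g⁻¹ x)_j`. -/
def glAct {d : ℕ} (g : GL (Fin d) ℂ) : Ad d →ₐ[ℂ] Ad d :=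
  MvPolynomial.aeval fun j =>
    ∑ k, ((g⁻¹ : GL (Fin d) ℂ) : Matrix (Fin d) (Fin d) ℂ) j k • MvPolynomial.X k

/-- Embedding of linear forms on `V` as degree-one polynomials. -/
def lin {d : ℕ} (θ : Vd d →ₗ[ℂ] ℂ) : Ad d :=
  ∑ j, θ (Pi.single j 1) • MvPolynomial.X j

structure CoxeterSetup (d n : ℕ) where
  Γ : Subgroup (GL (Fin d) ℂ)
  finite : Finite Γ
  s : Fin n → Γ
  gen : Subgroup.closure (Set.range s) = (⊤ : Subgroup Γ)
  α : Fin n → (Vd d →ₗ[ℂ] ℂ)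
  coroot : Fin n → Vd d
  pairing : ∀ i, α i (coroot i) = 2
  refl : ∀ i (v : Vd d),
    ((s i : GL (Fin d) ℂ) : Matrix (Fin d) (Fin d) ℂ).mulVec v = v - α i v • coroot i


/-- The subalgebra of `Γ'`-invariant polynomials. -/
def FixedSub {d n : ℕ} (S : CoxeterSetup d n) (Γ' : Subgroup S.Γ) : Subalgebra ℂ (Ad d) where
  carrier := {f | ∀ g ∈ Γ', glAct (g : GL (Fin d) ℂ) f = f}
  mul_mem' := fun hf hg g hgmem => by simp [map_mul, hf g hgmem, hg g hgmem]
  add_mem' := fun hf hg g hgmem => by simp [map_add, hf g hgmem, hg g hgmem]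
  algebraMap_mem' := fun c g _ => by simp

/-- `M` (with `Γ'`-action `ρ`) descends to `A^{Γ'}`. -/
def Descends {d n : ℕ} (S : CoxeterSetup d n) (Γ' : Subgroup S.Γ) (M : Type)
    [AddCommGroup M] [Module ℂ M] [Module (Ad d) M] [IsScalarTower ℂ (Ad d) M]
    (ρ : Γ' →* Module.End ℂ M) : Prop :=
  ∃ (N : Type) (_ : AddCommGroup N) (_ : Module (FixedSub S Γ') N)
    (e : ((Ad d) ⊗[FixedSub S Γ'] N) ≃ₗ[Ad d] M),
    ∀ (g : Γ') (a : Ad d) (x : N),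
      ρ g (e (a ⊗ₜ x)) = e ((glAct ((g : S.Γ) : GL (Fin d) ℂ) a) ⊗ₜ x)


/-- Alternating product `x·y·x·⋯` with `m` factors, starting with `x`. -/
def altProd {M : Type*} [Monoid M] (x y : M) : ℕ → M
  | 0 => 1
  | (j + 1) => x * altProd y x j

/-- The order `m_{ij}` of `sᵢ sⱼ` in `Γ`. -/
def mOrd {d n : ℕ} (S : CoxeterSetup d n) (i j : Fin n) : ℕ :=
  orderOf (S.s i * S.s j)

/-- Relations presenting the Demazure descent algebra `𝔇`: the inclusion of `A` is a
`ℂ`-algebra map, `Gᵢ² = 0`, and `Gᵢ·θ = θ(αᵢ^∨) + sᵢ(θ)·Gᵢ` for linear forms `θ`. -/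
inductive DRel {d n : ℕ} (S : CoxeterSetup d n) :
    FreeAlgebra ℂ (Ad d ⊕ Fin n) → FreeAlgebra ℂ (Ad d ⊕ Fin n) → Prop
  | add (a b : Ad d) :
      DRel S (FreeAlgebra.ι ℂ (Sum.inl a) + FreeAlgebra.ι ℂ (Sum.inl b))
        (FreeAlgebra.ι ℂ (Sum.inl (a + b)))
  | mul (a b : Ad d) :
      DRel S (FreeAlgebra.ι ℂ (Sum.inl a) * FreeAlgebra.ι ℂ (Sum.inl b))
        (FreeAlgebra.ι ℂ (Sum.inl (a * b)))
  | scalar (c : ℂ) :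
      DRel S (algebraMap ℂ _ c) (FreeAlgebra.ι ℂ (Sum.inl (algebraMap ℂ (Ad d) c)))
  | sq (i : Fin n) :
      DRel S (FreeAlgebra.ι ℂ (Sum.inr i) * FreeAlgebra.ι ℂ (Sum.inr i)) 0
  | straighten (i : Fin n) (θ : Vd d →ₗ[ℂ] ℂ) :
      DRel S (FreeAlgebra.ι ℂ (Sum.inr i) * FreeAlgebra.ι ℂ (Sum.inl (lin θ)))
        (algebraMap ℂ _ (θ (S.coroot i)) +
          FreeAlgebra.ι ℂ (Sum.inl (glAct ((S.s i : S.Γ) : GL (Fin d) ℂ) (lin θ))) *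
            FreeAlgebra.ι ℂ (Sum.inr i))

/-- The Demazure descent algebra `𝔇`. -/
abbrev DD {d n : ℕ} (S : CoxeterSetup d n) := RingQuot (DRel S)

/-- The generator `Gᵢ ∈ 𝔇`. -/
def GG {d n : ℕ} (S : CoxeterSetup d n) (i : Fin n) : DD S :=
  RingQuot.mkRingHom (DRel S) (FreeAlgebra.ι ℂ (Sum.inr i))

/-- The canonical ring homomorphism `A → 𝔇`. -/
def ofA {d n : ℕ} (S : CoxeterSetup d n) : Ad d →+* DD S where
  toFun a := RingQuot.mkRingHom (DRel S) (FreeAlgebra.ι ℂ (Sum.inl a))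
  map_one' := by
    have h := RingQuot.mkRingHom_rel (DRel.scalar (S := S) 1)
    simpa using h.symm
  map_mul' a b := by
    exact ((RingQuot.mkRingHom_rel (DRel.mul (S := S) a b)).symm).trans (map_mul _ _ _)
  map_zero' := by
    have h := RingQuot.mkRingHom_rel (DRel.scalar (S := S) 0)
    simpa using h.symm
  map_add' a b := by
    exact ((RingQuot.mkRingHom_rel (DRel.add (S := S) a b)).symm).trans (map_add _ _ _)

/-- The element `σᵢ := 1 − αᵢ·Gᵢ ∈ 𝔇`. -/
def sigmaD {d n : ℕ} (S : CoxeterSetup d n) (i : Fin n) : DD S :=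
  1 - ofA S (lin (S.α i)) * GG S i

/-- The set of Coxeter braid relators `B_{ij}`. -/
def coxeterBraidSet {d n : ℕ} (S : CoxeterSetup d n) : Set (DD S) :=
  {x | ∃ i j : Fin n, i ≠ j ∧
    x = altProd (sigmaD S i) (sigmaD S j) (mOrd S i j) -
        altProd (sigmaD S j) (sigmaD S i) (mOrd S i j)}

/-- The set of Demazure braid relators `B^D_{ij}`. -/
def demazureBraidSet {d n : ℕ} (S : CoxeterSetup d n) : Set (DD S) :=
  {x | ∃ i j : Fin n, i ≠ j ∧
    x = altProd (GG S i) (GG S j) (mOrd S i j) -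
        altProd (GG S j) (GG S i) (mOrd S i j)}

/-- The product in `𝔇` of the generators `G` along a word. -/
def wordProd {d n : ℕ} (S : CoxeterSetup d n) (w : List (Fin n)) : DD S :=
  (w.map (GG S)).prod

/-- The sequence of roots `α_k, s_k(α_l), s_k s_l(α_k), …` as degree-one polynomials. -/
def rootSeqP {d n : ℕ} (S : CoxeterSetup d n) (k l : Fin n) (j : ℕ) : Ad d :=
  glAct ((altProd (S.s k) (S.s l) j : S.Γ) : GL (Fin d) ℂ)
    (lin (S.α (if Even j then k else l)))

/-- `Δ_{k,l}`, the product of the `m_{kl}` roots `α_k, s_k(α_l), s_k s_l(α_k), …`. -/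
def DeltaP {d n : ℕ} (S : CoxeterSetup d n) (k l : Fin n) : Ad d :=
  ∏ j ∈ Finset.range (mOrd S k l), rootSeqP S k l j

/-!
The product `s_k s_l` has an eigenvector `x` among the linear forms, with eigenvalue a primitive
`m`-th root of unity `ζ`, `m = m_{kl}`, on which neither coroot vanishes. Put `z = s_k x`. Then
`s_k` exchanges `x` and `z`, `s_l` exchanges `x` and `ζ z`, and `Δ_{k,l}` is proportional to
`x ^ m - z ^ m`, which `D_k` sends to a multiple of the complete homogeneous sum `h_{m-1}(x, z)`.

Modulo `x z`, which both reflections fix, `h_n(x, η z)` agrees with `x ^ n + (η z) ^ n`, and the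
Demazure operator of the reflection exchanging `x` and `z` sends this to `1 - η ^ n` times a
nonzero multiple of `h_{n-1}(x, z)`. Here `η` is `ζ` or `ζ⁻¹` and `0 < n < m`, so `1 - η ^ n ≠ 0`.
Hence `m` alternating Demazure operators turn `Δ_{k,l}` into a nonzero constant modulo `x z`, and
for degree reasons into that constant itself.
-/

section DemazureOperators

/-- `D` is the Demazure operator `f ↦ α⁻¹ (f - s f)` of the reflection `s` with root `α`, specified
without division. -/
def IsDemazureOperator {K A : Type*} [CommRing K] [CommRing A] [Algebra K A]
    (s : A →ₐ[K] A) (α : A) (D : A → A) : Prop :=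
  ∀ f, α * D f = f - s f

/-- `s` exchanges `x` and `z`, acting on their span as the reflection with root `α`: the difference
`x - z` is a nonzero multiple of `α`. -/
structure SwapsAlong {K A : Type*} [CommRing K] [CommRing A] [Algebra K A]
    (s : A →ₐ[K] A) (α x z : A) : Prop where
  map_left : s x = z
  map_right : s z = x
  exists_sub_eq : ∃ c : K, c ≠ 0 ∧ x - z = c • α

/-- The complete homogeneous symmetric polynomial `h_n` evaluated at two elements. Up to scalars and
modulo `x * z`, Demazure operators lower `n` by one. -/
def twoVarHsymm {A : Type*} [CommRing A] (n : ℕ) (x z : A) : A :=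
  ∑ i ∈ Finset.range (n + 1), x ^ i * z ^ (n - i)

section TwoVarHsymm

variable {A : Type*} [CommRing A]

theorem twoVarHsymm_zero (x z : A) : twoVarHsymm 0 x z = 1 := by
  simp [twoVarHsymm]

theorem sub_mul_twoVarHsymm (n : ℕ) (x z : A) :
    (x - z) * twoVarHsymm n x z = x ^ (n + 1) - z ^ (n + 1) :=
  (Commute.all x z).mul_geom_sum₂ (n + 1)

theorem mul_dvd_twoVarHsymm_succ_sub (n : ℕ) (x z : A) :
    x * z ∣ twoVarHsymm (n + 1) x z - (x ^ (n + 1) + z ^ (n + 1)) := by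
  have middle_terms : twoVarHsymm (n + 1) x z - (x ^ (n + 1) + z ^ (n + 1)) =
      ∑ i ∈ Finset.range n, x ^ (i + 1) * z ^ (n - i) := by
    rw [twoVarHsymm, Finset.sum_range_succ, Finset.sum_range_succ']
    simp only [Nat.add_sub_add_right, pow_zero, Nat.sub_zero, Nat.sub_self]
    ring
  rw [middle_terms]
  refine Finset.dvd_sum fun i hi => mul_dvd_mul (dvd_pow_self x i.succ_ne_zero) (dvd_pow_self z ?_)
  exact Nat.sub_ne_zero_of_lt (Finset.mem_range.1 hi)

end TwoVarHsymm

variable {K A : Type*} [Field K] [CommRing A] [Algebra K A]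

theorem mul_smul_dvd_iff {η : K} (hη : η ≠ 0) {x z f : A} : x * η • z ∣ f ↔ x * z ∣ f := by
  rw [mul_smul_comm, Algebra.smul_def]
  exact (hη.isUnit.map (algebraMap K A)).mul_left_dvd

theorem SwapsAlong.map_mul {s : A →ₐ[K] A} {α x z : A} (hs : SwapsAlong s α x z) :
    s (x * z) = x * z := by
  rw [_root_.map_mul, hs.map_left, hs.map_right, mul_comm]

variable [IsDomain A]

namespace IsDemazureOperator

variable {s : A →ₐ[K] A} {α x z : A} {D : A → A}

theorem dvd_sub (hD : IsDemazureOperator s α D) (hα : α ≠ 0) {q f g : A} (hq : s q = q)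
    (hfg : q ∣ f - g) : q ∣ D f - D g := by
  obtain ⟨h, hh⟩ := hfg
  refine ⟨D h, mul_left_cancel₀ hα ?_⟩
  have hs : s f - s g = q * s h := by rw [← map_sub, hh, map_mul, hq]
  linear_combination hD f - hD g - q * hD h + hh - hs

theorem exists_apply_pow_eq (hD : IsDemazureOperator s α D) (hα : α ≠ 0)
    (hs : SwapsAlong s α x z) :
    ∃ c : K, c ≠ 0 ∧ ∀ (n : ℕ) (a b : K),
      D (a • x ^ (n + 1) + b • z ^ (n + 1)) = ((a - b) * c) • twoVarHsymm n x z := by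
  obtain ⟨c, hc, hxz⟩ := hs.exists_sub_eq
  refine ⟨c, hc, fun n a b => mul_left_cancel₀ hα ?_⟩
  calc α * D (a • x ^ (n + 1) + b • z ^ (n + 1))
      = (a - b) • (x ^ (n + 1) - z ^ (n + 1)) := by
        rw [hD]
        simp only [map_add, map_smul, map_pow, hs.map_left, hs.map_right]
        module
    _ = (a - b) • (c • α * twoVarHsymm n x z) := by rw [← hxz, sub_mul_twoVarHsymm]
    _ = α * ((a - b) * c) • twoVarHsymm n x z := by
        rw [smul_mul_assoc, smul_smul, mul_smul_comm]

theorem exists_dvd_sub_smul_twoVarHsymm (hD : IsDemazureOperator s α D) (hα : α ≠ 0)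
    (hs : SwapsAlong s α x z) {n : ℕ} {η a : K} (hη : η ^ (n + 1) ≠ 1) (ha : a ≠ 0) {f : A}
    (hf : x * z ∣ f - a • twoVarHsymm (n + 1) x (η • z)) :
    ∃ b : K, b ≠ 0 ∧ x * z ∣ D f - b • twoVarHsymm n x z := by
  obtain ⟨c, hc, hpow⟩ := hD.exists_apply_pow_eq hα hs
  refine ⟨(a - a * η ^ (n + 1)) * c, ?_, ?_⟩
  · rw [← mul_one_sub]
    exact mul_ne_zero (mul_ne_zero ha (sub_ne_zero.2 hη.symm)) hc
  · rw [← hpow]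
    refine hD.dvd_sub hα hs.map_mul ?_
    have hsymm : x * z ∣ twoVarHsymm (n + 1) x (η • z) - (x ^ (n + 1) + (η • z) ^ (n + 1)) :=
      (Dvd.intro (algebraMap K A η) (by rw [Algebra.smul_def]; ring)).trans
        (mul_dvd_twoVarHsymm_succ_sub n x (η • z))
    convert dvd_add hf (dvd_smul_of_dvd a hsymm) using 1
    rw [smul_pow]
    module

end IsDemazureOperator

variable {ι : Type*} {s : ι → A →ₐ[K] A} {α : ι → A} {D : ι → A → A}

-- The two reflections exchange roles at each step, which replaces `(z, η)` by `(η • z, η⁻¹)`.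
theorem exists_word_mul_dvd_foldr_sub (hα : ∀ i, α i ≠ 0)
    (hD : ∀ i, IsDemazureOperator (s i) (α i) (D i)) {k l : ι} {x z : A} {η : K} (hη₀ : η ≠ 0)
    (hk : SwapsAlong (s k) (α k) x z) (hl : SwapsAlong (s l) (α l) x (η • z))
    {n : ℕ} (hη : ∀ j, 0 < j → j ≤ n → η ^ j ≠ 1) {a : K} (ha : a ≠ 0) {f : A}
    (hf : x * z ∣ f - a • twoVarHsymm n x (η • z)) :
    ∃ w : List ι, w.length = n ∧ (∀ i ∈ w, i = k ∨ i = l) ∧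
      ∃ c : K, c ≠ 0 ∧ x * z ∣ w.foldr D f - algebraMap K A c := by
  induction n generalizing k l z η a f with
  | zero =>
    refine ⟨[], rfl, by simp, a, ha, ?_⟩
    rwa [twoVarHsymm_zero, ← Algebra.algebraMap_eq_smul_one] at hf
  | succ n ih =>
    obtain ⟨b, hb, hDf⟩ :=
      (hD k).exists_dvd_sub_smul_twoVarHsymm (hα k) hk (hη _ n.succ_pos le_rfl) ha hf
    have hz : η⁻¹ • η • z = z := inv_smul_smul₀ hη₀ z
    obtain ⟨w, hlen, hw, c, hc, hdvd⟩ := ih (inv_ne_zero hη₀) hl (hz.symm ▸ hk)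
      (fun j hj hjn => by simpa using hη j hj (hjn.trans n.le_succ)) hb
      (by rwa [hz, mul_smul_dvd_iff hη₀])
    refine ⟨w ++ [k], by simp [hlen], ?_, c, hc, ?_⟩
    · exact List.forall_mem_append.2 ⟨fun i hi => (hw i hi).symm, by simp⟩
    · simpa only [List.foldr_append, List.foldr_cons, List.foldr_nil] using
        (mul_smul_dvd_iff hη₀).1 hdvd

theorem exists_word_mul_dvd_foldr_pow_sub_pow_sub [NeZero (2 : K)] (hα : ∀ i, α i ≠ 0)
    (hD : ∀ i, IsDemazureOperator (s i) (α i) (D i)) {k l : ι} {x z : A} {ζ : K} {m : ℕ}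
    (hm : 0 < m) (hζ : IsPrimitiveRoot ζ m) (hk : SwapsAlong (s k) (α k) x z)
    (hl : SwapsAlong (s l) (α l) x (ζ • z)) {a : K} (ha : a ≠ 0) :
    ∃ w : List ι, w.length = m ∧ (∀ i ∈ w, i = k ∨ i = l) ∧
      ∃ c : K, c ≠ 0 ∧ x * z ∣ w.foldr D (a • (x ^ m - z ^ m)) - algebraMap K A c := by
  obtain ⟨n, rfl⟩ := Nat.exists_eq_add_one.2 hm
  have hζ₀ : ζ ≠ 0 := hζ.ne_zero hm.ne'
  have hz : ζ⁻¹ • ζ • z = z := inv_smul_smul₀ hζ₀ z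
  obtain ⟨c₀, hc₀, hpow⟩ := (hD k).exists_apply_pow_eq (hα k) hk
  have hfirst : D k (a • (x ^ (n + 1) - z ^ (n + 1))) = (2 * a * c₀) • twoVarHsymm n x z := by
    rw [smul_sub, sub_eq_add_neg, ← neg_smul, hpow]
    congr 1
    ring
  obtain ⟨w, hlen, hw, c, hc, hdvd⟩ := exists_word_mul_dvd_foldr_sub hα hD (inv_ne_zero hζ₀) hl
    (hz.symm ▸ hk) (n := n) (f := (2 * a * c₀) • twoVarHsymm n x z)
    (fun j hj hjn => by
      simpa using hζ.pow_ne_one_of_pos_of_lt hj.ne' (Nat.lt_succ_of_le hjn))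
    (mul_ne_zero (mul_ne_zero two_ne_zero ha) hc₀) (by simp [hz])
  refine ⟨w ++ [k], by simp [hlen], ?_, c, hc, ?_⟩
  · exact List.forall_mem_append.2 ⟨fun i hi => (hw i hi).symm, by simp⟩
  · rw [List.foldr_append, List.foldr_cons, List.foldr_nil, hfirst]
    exact (mul_smul_dvd_iff hζ₀).1 hdvd

end DemazureOperators

section ReflectionPairs

variable {K M : Type*} [Field K] [AddCommGroup M] [Module K M]

theorem apply_eq_self_of_isOfFinOrder [CharZero K] {T : Module.End K M} (hT : IsOfFinOrder T)
    {u : M} (hu : T (T u - u) = T u - u) : T u = u := by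
  have hpow : ∀ n : ℕ, (T ^ n) u = u + n • (T u - u) := by
    intro n
    induction n with
    | zero => simp
    | succ n ih =>
      rw [pow_succ', Module.End.mul_apply, ih, map_add, map_nsmul, hu, succ_nsmul]
      abel
  obtain ⟨N, hN, hTN⟩ := isOfFinOrder_iff_pow_eq_one.1 hT
  have hNu := hpow N
  rw [hTN, Module.End.one_apply, left_eq_add, ← Nat.cast_smul_eq_nsmul K, smul_eq_zero] at hNu
  exact sub_eq_zero.1 (hNu.resolve_left (Nat.cast_ne_zero.2 hN.ne'))

theorem exists_hasEigenvector_ne_one_of_isOfFinOrder [CharZero K] [IsAlgClosed K]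
    [FiniteDimensional K M] {T : Module.End K M} (hT : IsOfFinOrder T) (hT₁ : T ≠ 1) :
    ∃ (μ : K) (v : M), μ ≠ 1 ∧ T.HasEigenvector μ v := by
  have hinv : ∀ v ∈ LinearMap.range (T - 1), T v ∈ LinearMap.range (T - 1) := by
    rintro _ ⟨u, rfl⟩
    exact ⟨T u, by simp⟩
  have : Nontrivial (LinearMap.range (T - 1)) :=
    Submodule.nontrivial_iff_ne_bot.2 (by rwa [ne_eq, LinearMap.range_eq_bot, sub_eq_zero])
  obtain ⟨μ, hμ⟩ := Module.End.exists_eigenvalue (T.restrict hinv)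
  obtain ⟨⟨v, u, huv⟩, hv⟩ := hμ.exists_hasEigenvector
  have hTv : T v = μ • v := congrArg Subtype.val hv.apply_eq_smul
  have hv₀ : v ≠ 0 := fun h => hv.2 (Subtype.ext h)
  refine ⟨μ, v, ?_, Module.End.mem_eigenspace_iff.2 hTv, hv₀⟩
  rintro rfl
  have huv' : T u - u = v := huv
  have hTu : T u = u := apply_eq_self_of_isOfFinOrder hT (by rw [huv', hTv, one_smul])
  exact hv₀ (by rw [← huv', hTu, sub_self])

open Module (preReflection preReflection_apply involutive_preReflection)

variable {α β : M} {f g : Module.Dual K M}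

theorem preReflection_mul_apply_sub (u : M) :
    (preReflection α f * preReflection β g) u - u =
      -(g u • β) - f (preReflection β g u) • α := by
  rw [Module.End.mul_apply, preReflection_apply α, preReflection_apply β]
  abel

theorem preReflection_mul_pow_eq_one [CharZero K]
    (hr : IsOfFinOrder (preReflection α f * preReflection β g)) {j : ℕ}
    (hα : ((preReflection α f * preReflection β g) ^ j) α = α)
    (hβ : ((preReflection α f * preReflection β g) ^ j) β = β) :
    (preReflection α f * preReflection β g) ^ j = 1 := by
  set r := preReflection α f * preReflection β g with hr_def
  ext u
  refine apply_eq_self_of_isOfFinOrder hr.pow ?_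
  have hgeom : (r ^ j) u - u =
      r ((∑ i ∈ Finset.range j, r ^ i) u) - (∑ i ∈ Finset.range j, r ^ i) u :=
    (LinearMap.congr_fun (mul_geom_sum r j) u).symm
  rw [hgeom, hr_def, preReflection_mul_apply_sub, ← hr_def, map_sub, map_neg, map_smul, map_smul,
    hα, hβ]

theorem isPrimitiveRoot_orderOf_preReflection_mul [CharZero K] (hα : f α = 2) (hβ : g β = 2)
    (hr : IsOfFinOrder (preReflection α f * preReflection β g)) {ζ : K} {x : M}
    (hx : (preReflection α f * preReflection β g) x = ζ • x) (hfx : f x ≠ 0) (hgx : g x ≠ 0) :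
    IsPrimitiveRoot ζ (orderOf (preReflection α f * preReflection β g)) := by
  set s := preReflection α f
  set t := preReflection β g
  have hss : Function.Involutive s := involutive_preReflection hα
  have htt : Function.Involutive t := involutive_preReflection hβ
  have hx₀ : x ≠ 0 := by rintro rfl; simp at hfx
  have htx : t x = ζ • s x := by rw [← map_smul, ← hx, Module.End.mul_apply, hss]
  have hpow := (show (s * t).HasEigenvector ζ x from
    ⟨Module.End.mem_eigenspace_iff.2 hx, hx₀⟩).pow_apply
  refine ⟨?_, fun j hj => orderOf_dvd_of_pow_eq_one ?_⟩
  · refine smul_left_injective K hx₀ (?_ : ζ ^ orderOf (s * t) • x = (1 : K) • x)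
    rw [← hpow, pow_orderOf_eq_one, Module.End.one_apply, one_smul]
  · have hζ : ζ ≠ 0 := by
      rintro rfl
      exact hx₀ (by rw [← htt x, htx, zero_smul, map_zero])
    have hrx : ((s * t) ^ j) x = x := by rw [hpow, hj, one_smul]
    have hsx : (s * t).HasEigenvector ζ⁻¹ (s x) := by
      refine ⟨Module.End.mem_eigenspace_iff.2 ?_, fun h => hx₀ (by rw [← hss x, h, map_zero])⟩
      rw [eq_inv_smul_iff₀ hζ, ← map_smul, ← htx, Module.End.mul_apply, htt]
    have hrsx : ((s * t) ^ j) (s x) = s x := by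
      rw [hsx.pow_apply, inv_pow, hj, inv_one, one_smul]
    refine preReflection_mul_pow_eq_one hr ?_ ?_
    · have hαx : f x • α = x - s x := by rw [preReflection_apply, sub_sub_cancel]
      refine smul_right_injective M hfx ?_
      change f x • ((s * t) ^ j) α = f x • α
      rw [← map_smul, hαx, map_sub, hrx, hrsx]
    · have hβx : g x • β = x - ζ • s x := by rw [← htx, preReflection_apply, sub_sub_cancel]
      refine smul_right_injective M hgx ?_
      change g x • ((s * t) ^ j) β = g x • β
      rw [← map_smul, hβx, map_sub, map_smul, hrx, hrsx]

-- If one Cartan pairing vanishes, then the square of the product of the reflections is unipotent.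
theorem pairing_eq_zero_of_mul_eq_zero [CharZero K] (hα : f α = 2) (hβ : g β = 2)
    (hr : IsOfFinOrder (preReflection α f * preReflection β g)) (h : f β * g α = 0) :
    f β = 0 ∧ g α = 0 := by
  set r := preReflection α f * preReflection β g with hr_def
  have hα₀ : α ≠ 0 := by rintro rfl; simp at hα
  have hβ₀ : β ≠ 0 := by rintro rfl; simp at hβ
  have hrα : r α = -α - g α • β := by
    simp only [hr_def, Module.End.mul_apply, preReflection_apply, map_sub, map_smul, hα]
    linear_combination (norm := module) h • α
  have hrβ : r β = f β • α - β := by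
    simp only [hr_def, Module.End.mul_apply, preReflection_apply, map_sub, map_smul, hβ]
    module
  have hr2α : (r ^ 2) α = α + (2 * g α) • β := by
    simp only [pow_two, Module.End.mul_apply, hrα, hrβ, map_sub, map_neg, map_smul, smul_sub,
      smul_smul, mul_comm (g α), h]
    module
  have hr2β : (r ^ 2) β = β - (2 * f β) • α := by
    simp only [pow_two, Module.End.mul_apply, hrα, hrβ, map_sub, map_smul, smul_sub,
      smul_smul, h]
    module
  have hfixα : (r ^ 2) α = α := apply_eq_self_of_isOfFinOrder hr.pow <| by
    rw [hr2α, add_sub_cancel_left, map_smul, hr2β, smul_sub, smul_smul,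
      show 2 * g α * (2 * f β) = 4 * (f β * g α) by ring, h, mul_zero, zero_smul, sub_zero]
  have hfixβ : (r ^ 2) β = β := apply_eq_self_of_isOfFinOrder hr.pow <| by
    rw [hr2β, sub_sub_cancel_left, map_neg, map_smul, hr2α, smul_add, smul_smul,
      show 2 * f β * (2 * g α) = 4 * (f β * g α) by ring, h, mul_zero, zero_smul, add_zero]
  constructor
  · simpa [hr2β, hα₀] using hfixβ
  · simpa [hr2α, hβ₀] using hfixα

theorem exists_preReflection_mul_apply_eq_smul [CharZero K] [IsAlgClosed K] [FiniteDimensional K M]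
    (hα : f α = 2) (hβ : g β = 2)
    (hr : IsOfFinOrder (preReflection α f * preReflection β g)) :
    ∃ (ζ : K) (x : M), (preReflection α f * preReflection β g) x = ζ • x ∧ f x ≠ 0 ∧ g x ≠ 0 := by
  by_cases h₀ : f β * g α = 0
  · obtain ⟨hfβ, hgα⟩ := pairing_eq_zero_of_mul_eq_zero hα hβ hr h₀
    refine ⟨-1, α + β, ?_, by simp [hα, hfβ], by simp [hβ, hgα]⟩
    simp only [Module.End.mul_apply, preReflection_apply, map_add, map_sub, map_smul, hα, hβ, hfβ,
      hgα]
    module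
  obtain ⟨hfβ, hgα⟩ := mul_ne_zero_iff.1 h₀
  by_cases h₁ : preReflection α f * preReflection β g = 1
  · exact ⟨1, α, by rw [h₁, one_smul, Module.End.one_apply], by simp [hα], hgα⟩
  obtain ⟨ζ, x, hζ, hx⟩ := exists_hasEigenvector_ne_one_of_isOfFinOrder hr h₁
  have htx : preReflection β g x = ζ • preReflection α f x := by
    rw [← map_smul, ← hx.apply_eq_smul, Module.End.mul_apply, involutive_preReflection hα]
  rw [preReflection_apply, preReflection_apply] at htx
  have hx₀ : (1 - ζ) • x ≠ 0 := smul_ne_zero (sub_ne_zero.2 hζ.symm) hx.2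
  refine ⟨ζ, x, hx.apply_eq_smul, fun hfx => ?_, fun hgx => ?_⟩
  · have hxβ : (1 - ζ) • x = g x • β := by
      rw [hfx, zero_smul, sub_zero] at htx
      linear_combination (norm := module) htx
    have hgx : g x = 0 := by simpa [hfx, hfβ] using congrArg f hxβ
    exact hx₀ (by rw [hxβ, hgx, zero_smul])
  · have hxα : (1 - ζ) • x = -(ζ * f x) • α := by
      rw [hgx, zero_smul, sub_zero] at htx
      linear_combination (norm := module) htx
    have hfx : ζ * f x = 0 := by simpa [hgx, hgα] using congrArg g hxα
    exact hx₀ (by rw [hxα, hfx, neg_zero, zero_smul])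

end ReflectionPairs

theorem prod_range_sub_pow_mul {R : Type*} [CommRing R] [IsDomain R] {ζ : R} {m : ℕ}
    (hζ : IsPrimitiveRoot ζ m) (hm : 0 < m) (x z : R) :
    ∏ j ∈ Finset.range m, (x - ζ ^ j * z) = x ^ m - z ^ m := by
  simpa [Polynomial.eval_prod] using
    (congrArg (Polynomial.eval x) (X_pow_sub_C_eq_prod hζ hm (α := z) rfl)).symm

section PolynomialDegree

variable {σ τ R : Type*} [CommRing R]

theorem totalDegree_aeval_le {g : σ → MvPolynomial τ R} (hg : ∀ i, (g i).totalDegree ≤ 1)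
    (f : MvPolynomial σ R) : (MvPolynomial.aeval g f).totalDegree ≤ f.totalDegree := by
  rw [MvPolynomial.aeval_def, MvPolynomial.eval₂_eq]
  refine MvPolynomial.totalDegree_finsetSum_le fun m hm => ?_
  calc (MvPolynomial.C (f.coeff m) * ∏ i ∈ m.support, g i ^ m i).totalDegree
      ≤ (∏ i ∈ m.support, g i ^ m i).totalDegree := by
        simpa using MvPolynomial.totalDegree_mul (MvPolynomial.C (f.coeff m)) _
    _ ≤ ∑ i ∈ m.support, (g i ^ m i).totalDegree := MvPolynomial.totalDegree_finsetProd _ _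
    _ ≤ ∑ i ∈ m.support, m i := Finset.sum_le_sum fun i _ =>
        (MvPolynomial.totalDegree_pow _ _).trans (mul_le_of_le_one_right (m i).zero_le (hg i))
    _ ≤ f.totalDegree := MvPolynomial.le_totalDegree hm

theorem totalDegree_foldr_le {ι : Type*} {D : ι → MvPolynomial σ R → MvPolynomial σ R}
    (hD : ∀ i f, (D i f).totalDegree ≤ f.totalDegree - 1) (f : MvPolynomial σ R) (w : List ι) :
    (w.foldr D f).totalDegree ≤ f.totalDegree - w.length := by
  induction w with
  | nil => simp
  | cons i w ih =>
    have := hD i (w.foldr D f)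
    simp only [List.foldr_cons, List.length_cons]
    omega

theorem eq_C_of_dvd_sub_C_of_totalDegree_eq_zero {p f : MvPolynomial σ R} {c : R}
    (hp : MvPolynomial.constantCoeff p = 0) (hf : f.totalDegree = 0)
    (hdvd : p ∣ f - MvPolynomial.C c) : f = MvPolynomial.C c := by
  have hc := map_dvd MvPolynomial.constantCoeff hdvd
  rw [hp, zero_dvd_iff, map_sub, MvPolynomial.constantCoeff_C, sub_eq_zero] at hc
  rw [MvPolynomial.totalDegree_eq_zero_iff_eq_C.1 hf, ← hc, MvPolynomial.constantCoeff_eq]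

theorem IsDemazureOperator.totalDegree_apply_le [IsDomain R]
    {s : MvPolynomial σ R →ₐ[R] MvPolynomial σ R} {α : MvPolynomial σ R}
    {D : MvPolynomial σ R → MvPolynomial σ R} (hD : IsDemazureOperator s α D)
    (hs : ∀ f, (s f).totalDegree ≤ f.totalDegree) (hα : α.totalDegree = 1) (f : MvPolynomial σ R) :
    (D f).totalDegree ≤ f.totalDegree - 1 := by
  by_cases hDf : D f = 0
  · simp [hDf]
  have hα₀ : α ≠ 0 := by rintro rfl; simp at hα
  have hmul := MvPolynomial.totalDegree_mul_of_isDomain hα₀ hDf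
  have hsub : (f - s f).totalDegree ≤ f.totalDegree :=
    (MvPolynomial.totalDegree_sub f (s f)).trans (max_le le_rfl (hs f))
  rw [hD f, hα] at hmul
  omega

end PolynomialDegree

section LinearForms

variable {d : ℕ}

theorem lin_sub (θ η : Module.Dual ℂ (Vd d)) : lin (θ - η) = lin θ - lin η := by
  simp [lin, sub_smul]

theorem lin_smul (c : ℂ) (θ : Module.Dual ℂ (Vd d)) : lin (c • θ) = c • lin θ := by
  simp [lin, Finset.smul_sum, smul_smul]

theorem eval_lin (θ : Module.Dual ℂ (Vd d)) (v : Vd d) : MvPolynomial.eval v (lin θ) = θ v := by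
  conv_rhs => rw [pi_eq_sum_univ' v]
  simp [lin, MvPolynomial.smul_eq_C_mul, mul_comm]

theorem constantCoeff_lin (θ : Module.Dual ℂ (Vd d)) : MvPolynomial.constantCoeff (lin θ) = 0 := by
  simp [lin, MvPolynomial.smul_eq_C_mul]

theorem isHomogeneous_lin (θ : Module.Dual ℂ (Vd d)) : (lin θ).IsHomogeneous 1 := by
  refine MvPolynomial.IsHomogeneous.sum _ _ _ fun j _ => ?_
  rw [MvPolynomial.smul_eq_C_mul]
  exact MvPolynomial.isHomogeneous_C_mul_X _ _

/-- The contragredient representation of `GL(V)` on linear forms, `θ ↦ θ ∘ g⁻¹`. -/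
def dualAct (d : ℕ) : GL (Fin d) ℂ →* Module.End ℂ (Module.Dual ℂ (Vd d)) where
  toFun g := (Matrix.mulVecLin (↑g⁻¹ : Matrix (Fin d) (Fin d) ℂ)).dualMap
  map_one' := by ext; simp
  map_mul' g h := by ext; simp

theorem dualAct_apply (g : GL (Fin d) ℂ) (θ : Module.Dual ℂ (Vd d)) (v : Vd d) :
    dualAct d g θ v = θ ((↑g⁻¹ : Matrix (Fin d) (Fin d) ℂ).mulVec v) :=
  rfl

theorem dualAct_injective : Function.Injective (dualAct d) := by
  refine (injective_iff_map_eq_one _).2 fun g hg => ?_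
  rw [← inv_eq_one, ← Units.val_eq_one, Matrix.ext_iff_mulVec]
  intro v
  ext i
  simpa [dualAct_apply] using congrArg (fun T => T (LinearMap.proj i) v) hg

theorem glAct_lin (g : GL (Fin d) ℂ) (θ : Module.Dual ℂ (Vd d)) :
    glAct g (lin θ) = lin (dualAct d g θ) := by
  simp only [lin, glAct, map_sum, map_smul, MvPolynomial.aeval_X, Finset.smul_sum, smul_smul]
  rw [Finset.sum_comm]
  refine Finset.sum_congr rfl fun k _ => ?_
  rw [← Finset.sum_smul, dualAct_apply, Matrix.mulVec_single_one, ← eval_lin]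
  simp [lin, MvPolynomial.smul_eq_C_mul]

theorem glAct_one (f : Ad d) : glAct 1 f = f := by
  have : glAct (1 : GL (Fin d) ℂ) = AlgHom.id ℂ (Ad d) :=
    MvPolynomial.algHom_ext fun j => by simp [glAct, Matrix.one_apply]
  rw [this, AlgHom.id_apply]

theorem glAct_mul (g h : GL (Fin d) ℂ) (f : Ad d) : glAct (g * h) f = glAct g (glAct h f) := by
  have : glAct (g * h) = (glAct g).comp (glAct h) := by
    refine MvPolynomial.algHom_ext fun j => ?_
    simp only [glAct, AlgHom.comp_apply, MvPolynomial.aeval_X, map_sum, map_smul, mul_inv_rev,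
      Units.val_mul, Matrix.mul_apply, Finset.smul_sum, smul_smul, Finset.sum_smul]
    exact Finset.sum_comm
  rw [this, AlgHom.comp_apply]

theorem totalDegree_glAct_le (g : GL (Fin d) ℂ) (f : Ad d) :
    (glAct g f).totalDegree ≤ f.totalDegree :=
  totalDegree_aeval_le (fun _ => MvPolynomial.totalDegree_finsetSum_le fun _ _ =>
    (MvPolynomial.totalDegree_smul_le _ _).trans (MvPolynomial.totalDegree_X _).le) f

end LinearForms

namespace CoxeterSetup

variable {d n : ℕ} (S : CoxeterSetup d n)

open Module (preReflection)

theorem lin_α_ne_zero (i : Fin n) : lin (S.α i) ≠ 0 := by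
  intro h
  have := S.pairing i
  rw [← eval_lin, h, map_zero] at this
  exact two_ne_zero this.symm

theorem s_mul_self (i : Fin n) : S.s i * S.s i = 1 := by
  rw [← OneMemClass.coe_eq_one, ← Units.val_eq_one, Matrix.ext_iff_mulVec]
  intro v
  simp only [Subgroup.coe_mul, Units.val_mul, ← Matrix.mulVec_mulVec, S.refl,
    Matrix.one_mulVec, map_sub, map_smul, S.pairing]
  module

theorem dualAct_s (i : Fin n) :
    dualAct d (S.s i) = preReflection (S.α i) (Module.Dual.eval ℂ (Vd d) (S.coroot i)) := by
  have hinv : (S.s i : GL (Fin d) ℂ)⁻¹ = S.s i :=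
    congrArg Subtype.val (inv_eq_of_mul_eq_one_left (S.s_mul_self i))
  refine LinearMap.ext fun θ => LinearMap.ext fun v => ?_
  rw [dualAct_apply, hinv, S.refl]
  simp [Module.preReflection_apply, mul_comm]

theorem eval_coroot_α (i : Fin n) : Module.Dual.eval ℂ (Vd d) (S.coroot i) (S.α i) = 2 :=
  S.pairing i

theorem dualAct_s_dualAct_s (i : Fin n) (θ : Module.Dual ℂ (Vd d)) :
    dualAct d (S.s i) (dualAct d (S.s i) θ) = θ := by
  rw [dualAct_s]
  exact Module.involutive_preReflection (S.eval_coroot_α i) θ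

theorem swapsAlong_lin (i : Fin n) {θ : Module.Dual ℂ (Vd d)} (hθ : θ (S.coroot i) ≠ 0) :
    SwapsAlong (glAct (S.s i : GL (Fin d) ℂ)) (lin (S.α i)) (lin θ)
      (lin (dualAct d (S.s i) θ)) where
  map_left := glAct_lin _ θ
  map_right := by rw [glAct_lin, dualAct_s_dualAct_s]
  exists_sub_eq := by
    refine ⟨θ (S.coroot i), hθ, ?_⟩
    rw [← lin_sub, ← lin_smul, dualAct_s, Module.preReflection_apply, sub_sub_cancel,
      Module.Dual.eval_apply]

theorem orderOf_dualAct_s_mul (k l : Fin n) :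
    orderOf (dualAct d (S.s k) * dualAct d (S.s l)) = mOrd S k l := by
  have hinj : Function.Injective ((dualAct d).comp S.Γ.subtype) :=
    dualAct_injective.comp Subtype.val_injective
  simpa [mOrd] using orderOf_injective _ hinj (S.s k * S.s l)

theorem mOrd_pos (k l : Fin n) : 0 < mOrd S k l :=
  have := S.finite
  orderOf_pos _

theorem exists_isPrimitiveRoot_dualAct_s_eq_smul (k l : Fin n) :
    ∃ (ζ : ℂ) (θ : Module.Dual ℂ (Vd d)), IsPrimitiveRoot ζ (mOrd S k l) ∧
      dualAct d (S.s l) θ = ζ • dualAct d (S.s k) θ ∧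
      θ (S.coroot k) ≠ 0 ∧ θ (S.coroot l) ≠ 0 := by
  have hr : IsOfFinOrder (dualAct d (S.s k) * dualAct d (S.s l)) :=
    orderOf_pos_iff.1 (S.orderOf_dualAct_s_mul k l ▸ S.mOrd_pos k l)
  have hord := S.orderOf_dualAct_s_mul k l
  simp only [dualAct_s] at hr hord
  obtain ⟨ζ, θ, hθ, hk, hl⟩ :=
    exists_preReflection_mul_apply_eq_smul (S.eval_coroot_α k) (S.eval_coroot_α l) hr
  have hζ := isPrimitiveRoot_orderOf_preReflection_mul (S.eval_coroot_α k) (S.eval_coroot_α l)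
    hr hθ hk hl
  refine ⟨ζ, θ, hord ▸ hζ, ?_, hk, hl⟩
  rw [← dualAct_s, ← dualAct_s, Module.End.mul_apply] at hθ
  rw [← map_smul, ← hθ, dualAct_s_dualAct_s]

theorem exists_swapsAlong (k l : Fin n) :
    ∃ (ζ : ℂ) (x z : Ad d), IsPrimitiveRoot ζ (mOrd S k l) ∧ MvPolynomial.constantCoeff x = 0 ∧
      SwapsAlong (glAct (S.s k : GL (Fin d) ℂ)) (lin (S.α k)) x z ∧
      SwapsAlong (glAct (S.s l : GL (Fin d) ℂ)) (lin (S.α l)) x (ζ • z) := by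
  obtain ⟨ζ, θ, hζ, hθ, hk, hl⟩ := S.exists_isPrimitiveRoot_dualAct_s_eq_smul k l
  refine ⟨ζ, lin θ, lin (dualAct d (S.s k) θ), hζ, constantCoeff_lin θ, S.swapsAlong_lin k hk, ?_⟩
  rw [← lin_smul, ← hθ]
  exact S.swapsAlong_lin l hl

theorem rootSeqP_zero (k l : Fin n) : rootSeqP S k l 0 = lin (S.α k) := by
  simp [rootSeqP, altProd, glAct_one]

theorem rootSeqP_succ (k l : Fin n) (j : ℕ) :
    rootSeqP S k l (j + 1) = glAct (S.s k : GL (Fin d) ℂ) (rootSeqP S l k j) := by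
  simp only [rootSeqP, altProd, Subgroup.coe_mul, glAct_mul, Nat.even_add_one, ite_not]

theorem totalDegree_rootSeqP_le (k l : Fin n) (j : ℕ) : (rootSeqP S k l j).totalDegree ≤ 1 :=
  (totalDegree_glAct_le _ _).trans (isHomogeneous_lin _).totalDegree_le

theorem exists_rootSeqP_eq_smul {k l : Fin n} {η : ℂ} (hη : η ≠ 0) {x z : Ad d}
    (hk : SwapsAlong (glAct (S.s k : GL (Fin d) ℂ)) (lin (S.α k)) x z)
    (hl : SwapsAlong (glAct (S.s l : GL (Fin d) ℂ)) (lin (S.α l)) x (η • z)) (j : ℕ) :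
    ∃ c : ℂ, c ≠ 0 ∧ rootSeqP S k l j = c • (x - (η⁻¹) ^ j • z) := by
  induction j generalizing k l η z with
  | zero =>
    obtain ⟨c, hc, hxz⟩ := hk.exists_sub_eq
    refine ⟨c⁻¹, inv_ne_zero hc, ?_⟩
    rw [rootSeqP_zero, pow_zero, one_smul, hxz, inv_smul_smul₀ hc]
  | succ j ih =>
    have hz : η⁻¹ • η • z = z := inv_smul_smul₀ hη z
    obtain ⟨c, hc, hroot⟩ := ih (inv_ne_zero hη) hl (hz.symm ▸ hk)
    refine ⟨-(c * η ^ (j + 1)), neg_ne_zero.2 (mul_ne_zero hc (pow_ne_zero _ hη)), ?_⟩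
    have hcancel : η ^ (j + 1) * η⁻¹ ^ (j + 1) = 1 := by
      rw [← mul_pow, mul_inv_cancel₀ hη, one_pow]
    rw [rootSeqP_succ, hroot, inv_inv, smul_smul, ← pow_succ, map_smul, map_sub, map_smul,
      hk.map_left, hk.map_right]
    linear_combination (norm := module) (-c * hcancel) • z

theorem exists_deltaP_eq_smul {k l : Fin n} {ζ : ℂ} (hζ : IsPrimitiveRoot ζ (mOrd S k l))
    {x z : Ad d} (hk : SwapsAlong (glAct (S.s k : GL (Fin d) ℂ)) (lin (S.α k)) x z)
    (hl : SwapsAlong (glAct (S.s l : GL (Fin d) ℂ)) (lin (S.α l)) x (ζ • z)) :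
    ∃ c : ℂ, c ≠ 0 ∧ DeltaP S k l = c • (x ^ mOrd S k l - z ^ mOrd S k l) := by
  have hm := S.mOrd_pos k l
  choose c hc hroot using S.exists_rootSeqP_eq_smul (hζ.ne_zero hm.ne') hk hl
  refine ⟨∏ j ∈ Finset.range (mOrd S k l), c j, Finset.prod_ne_zero_iff.2 fun j _ => hc j, ?_⟩
  have hC : IsPrimitiveRoot (MvPolynomial.C ζ⁻¹ : Ad d) (mOrd S k l) :=
    hζ.inv.map_of_injective (MvPolynomial.C_injective _ _)
  simp only [DeltaP, hroot, MvPolynomial.smul_eq_C_mul, map_pow, map_prod,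
    Finset.prod_mul_distrib, prod_range_sub_pow_mul hC hm]

theorem totalDegree_deltaP_le (k l : Fin n) : (DeltaP S k l).totalDegree ≤ mOrd S k l := by
  refine (MvPolynomial.totalDegree_finsetProd _ _).trans ?_
  simpa using Finset.sum_le_sum fun j (_ : j ∈ Finset.range (mOrd S k l)) =>
    S.totalDegree_rootSeqP_le k l j

theorem exists_word_foldr_deltaP_eq_C {D : Fin n → Ad d → Ad d}
    (hD : ∀ i, IsDemazureOperator (glAct (S.s i : GL (Fin d) ℂ)) (lin (S.α i)) (D i))
    (k l : Fin n) :
    ∃ w : List (Fin n), (∀ i ∈ w, i = k ∨ i = l) ∧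
      ∃ c : ℂ, c ≠ 0 ∧ w.foldr D (DeltaP S k l) = MvPolynomial.C c := by
  obtain ⟨ζ, x, z, hζ, hx, hk, hl⟩ := S.exists_swapsAlong k l
  obtain ⟨a, ha, hΔ⟩ := S.exists_deltaP_eq_smul hζ hk hl
  obtain ⟨w, hlen, hw, c, hc, hdvd⟩ := exists_word_mul_dvd_foldr_pow_sub_pow_sub
    S.lin_α_ne_zero hD (S.mOrd_pos k l) hζ hk hl ha
  rw [← hΔ] at hdvd
  have hdeg_D : ∀ i f, (D i f).totalDegree ≤ f.totalDegree - 1 := fun i =>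
    (hD i).totalDegree_apply_le (totalDegree_glAct_le _)
      ((isHomogeneous_lin _).totalDegree (S.lin_α_ne_zero i))
  have hdeg : (w.foldr D (DeltaP S k l)).totalDegree = 0 := by
    have := totalDegree_foldr_le hdeg_D (DeltaP S k l) w
    have := S.totalDegree_deltaP_le k l
    omega
  exact ⟨w, hw, c, hc,
    eq_C_of_dvd_sub_C_of_totalDegree_eq_zero (by rw [map_mul, hx, zero_mul]) hdeg hdvd⟩

end CoxeterSetup

/-- For `k ≠ l` there are finitely many compositions `Ξ_t` of the
Demazure operators `D_k, D_l` and polynomials `c_t ∈ ℂ[α_k, α_l]` with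
`∑ t, c_t · Ξ_t(Δ_{k,l}) = 1`. -/
theorem exists_combination_xi_delta_eq_one {d n : ℕ} (S : CoxeterSetup d n)
    (k l : Fin n) (hkl : k ≠ l)
    (D : Fin n → Ad d → Ad d)
    (hD : ∀ (i : Fin n) (f : Ad d),
      lin (S.α i) * D i f = f - glAct ((S.s i : S.Γ) : GL (Fin d) ℂ) f) :
    ∃ (r : ℕ) (Ξ : Fin r → List (Fin n)) (c : Fin r → Ad d),
      (∀ t, ∀ x ∈ Ξ t, x = k ∨ x = l) ∧
      (∀ t, c t ∈ Algebra.adjoin ℂ {lin (S.α k), lin (S.α l)}) ∧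
      ∑ t, c t * (Ξ t).foldr (fun u x => D u x) (DeltaP S k l) = 1 := by
  obtain ⟨w, hw, c, hc, hwΔ⟩ := S.exists_word_foldr_deltaP_eq_C hD k l
  refine ⟨1, fun _ => w, fun _ => MvPolynomial.C c⁻¹, fun _ => hw,
    fun _ => Subalgebra.algebraMap_mem _ _, ?_⟩
  rw [Fin.sum_univ_one, hwΔ, ← map_mul, inv_mul_cancel₀ hc, map_one]
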